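/- Let a_r, a_t ∈ ℝ with a_t ≠ 0, let R = √(a_r² + a_t²) and ξ = sgn(a_t)·arccos(a_r / R) ∈ [−π, π]. Define ω* = −π/2 − ξ if ξ ∈ [−π, −π/2); ω* = 0 if ξ ∈ [−π/2, π/4); and ω* = π/2 otherwise. Then ω* ∈ [0, π/2] and for every ω ∈ [0, π/2] one has a_r·sin(ω*) + a_t·cos(ω*) ≤ a_r·sin(ω) + a_t·cos(ω). Consequently the amplitude pair β_r = sin²(ω*), β_t = cos²(ω*) satisfies β_r + β_t = 1 and minimizes a_r·√β_r + a_t·√β_t over all β_r, β_t ≥ 0 with β_r + β_t = 1. (Proposition 2: closed-form optimal STAR-RIS amplitude coefficients given the phase shifts.) -/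

import Mathlib

/-!
Writing `R = √(a_r² + a_t²)`, the angle `ξ` is the polar angle of `(a_r, a_t)`, so
`a_r sin ω + a_t cos ω = R sin (ω + ξ)`. Both minimization claims are instances of one
inequality over the quarter circle `s, c ≥ 0`, `s² + c² = 1` (`polar_min`): when `ξ < -π/2` the
global minimum `-R` is attained inside the arc, and otherwise the minimum sits at the endpoint
with the smaller of the values `R sin ξ` and `R cos ξ`.
-/

/-- The signed arccosine in the statement is a polar angle of `(x, y)`, also when `y < 0`. -/
lemma polar_angle (x y : ℝ) (hy : y ≠ 0) (ξ : ℝ)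
    (hξ : ξ = Real.sign y * Real.arccos (x / Real.sqrt (x ^ 2 + y ^ 2))) :
    -Real.pi ≤ ξ ∧ ξ ≤ Real.pi ∧ x = Real.sqrt (x ^ 2 + y ^ 2) * Real.cos ξ ∧
      y = Real.sqrt (x ^ 2 + y ^ 2) * Real.sin ξ := by
  have hpos : 0 < x ^ 2 + y ^ 2 := by positivity
  have hsq : Real.sqrt (x ^ 2 + y ^ 2) ^ 2 = x ^ 2 + y ^ 2 := Real.sq_sqrt hpos.le
  have hR : 0 < Real.sqrt (x ^ 2 + y ^ 2) := Real.sqrt_pos.mpr hpos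
  set R := Real.sqrt (x ^ 2 + y ^ 2)
  have hx : |x| ≤ R := abs_le_of_sq_le_sq (by nlinarith [sq_nonneg y]) hR.le
  have h1 : -1 ≤ x / R := by rw [le_div_iff₀ hR]; linarith [(abs_le.mp hx).1]
  have h2 : x / R ≤ 1 := by rw [div_le_one hR]; exact (abs_le.mp hx).2
  have hcos : R * Real.cos (Real.arccos (x / R)) = x := by
    rw [Real.cos_arccos h1 h2]; field_simp
  have hsin : R * Real.sin (Real.arccos (x / R)) = |y| := by
    have e : 1 - (x / R) ^ 2 = (|y| / R) ^ 2 := by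
      rw [div_pow, div_pow, sq_abs]; field_simp; linarith
    rw [Real.sin_arccos, e, Real.sqrt_sq (by positivity)]; field_simp
  have h0 := Real.arccos_nonneg (x / R)
  have hpi := Real.arccos_le_pi (x / R)
  rcases lt_or_gt_of_ne hy with h | h
  · rw [Real.sign_of_neg h, neg_one_mul] at hξ
    rw [abs_of_neg h] at hsin
    subst hξ
    rw [Real.cos_neg, Real.sin_neg]
    refine ⟨by linarith, by linarith, hcos.symm, by linarith⟩
  · rw [Real.sign_of_pos h, one_mul] at hξ
    rw [abs_of_pos h] at hsin
    subst hξ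
    exact ⟨by linarith, hpi, hcos.symm, hsin.symm⟩

/-- The angle `w` is feasible and minimizes the unit-amplitude objective over the quarter circle,
parameterized by its Cartesian points `(c, s)` so that it covers both the angles `ω` and the
amplitudes `(√βr, √βt)`. -/
lemma polar_min (ξ w : ℝ) (h1 : -Real.pi ≤ ξ) (h2 : ξ ≤ Real.pi)
    (hw : w =
      if -Real.pi ≤ ξ ∧ ξ < -(Real.pi / 2) then -(Real.pi / 2) - ξ
      else if -(Real.pi / 2) ≤ ξ ∧ ξ < Real.pi / 4 then 0
      else Real.pi / 2) :
    w ∈ Set.Icc 0 (Real.pi / 2) ∧ ∀ s c : ℝ, 0 ≤ s → 0 ≤ c → s ^ 2 + c ^ 2 = 1 →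
      Real.cos ξ * Real.sin w + Real.sin ξ * Real.cos w ≤ Real.cos ξ * s + Real.sin ξ * c := by
  have hp := Real.pi_pos
  split_ifs at hw with hA hB
  · refine ⟨⟨by linarith [hA.2], by linarith⟩, fun s c _ _ hsc => ?_⟩
    have e : Real.cos ξ * Real.sin w + Real.sin ξ * Real.cos w = -1 := by
      rw [add_comm, ← Real.sin_add, hw, show ξ + (-(Real.pi / 2) - ξ) = -(Real.pi / 2) by ring,
        Real.sin_neg, Real.sin_pi_div_two]
    rw [e]
    nlinarith [Real.sin_sq_add_cos_sq ξ, sq_nonneg (Real.cos ξ + s), sq_nonneg (Real.sin ξ + c)]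
  · subst hw
    refine ⟨⟨le_rfl, by linarith⟩, fun s c hs hc hsc => ?_⟩
    have hc1 : c ≤ 1 := by nlinarith
    have hsum : 1 ≤ s + c := by nlinarith [mul_nonneg hs hc]
    rw [Real.sin_zero, Real.cos_zero]
    rcases le_total ξ 0 with h | h
    · have hcos : 0 ≤ Real.cos ξ := Real.cos_nonneg_of_neg_pi_div_two_le_of_le hB.1 (by linarith)
      have hsin : Real.sin ξ ≤ 0 := Real.sin_nonpos_of_nonpos_of_neg_pi_le h h1
      nlinarith [mul_nonneg hcos hs]
    · have hsin : 0 ≤ Real.sin ξ := Real.sin_nonneg_of_nonneg_of_le_pi h h2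
      have hle : Real.sin ξ ≤ Real.cos ξ := by
        rw [← Real.sin_pi_div_two_sub]
        exact Real.sin_le_sin_of_le_of_le_pi_div_two (by linarith) (by linarith)
          (by linarith [hB.2])
      nlinarith [mul_le_mul_of_nonneg_right hle hs, mul_le_mul_of_nonneg_left hsum hsin]
  · subst hw
    refine ⟨⟨by linarith, le_rfl⟩, fun s c hs hc hsc => ?_⟩
    have hs1 : s ≤ 1 := by nlinarith
    have hsum : 1 ≤ s + c := by nlinarith [mul_nonneg hs hc]
    have hge : -(Real.pi / 2) ≤ ξ := by
      by_contra! h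
      exact hA ⟨h1, h⟩
    have hge' : Real.pi / 4 ≤ ξ := by
      by_contra! h
      exact hB ⟨hge, h⟩
    have hsin : 0 ≤ Real.sin ξ := Real.sin_nonneg_of_nonneg_of_le_pi (by linarith) h2
    rw [Real.sin_pi_div_two, Real.cos_pi_div_two]
    rcases le_total (Real.cos ξ) 0 with h | h
    · nlinarith [mul_nonneg hsin hc]
    · have hle : Real.cos ξ ≤ Real.sin ξ := by
        rw [← Real.cos_pi_div_two_sub]
        -- `|π/2 - ξ| ≤ ξ ≤ π`, and `cos` is even and decreasing on `[0, π]`.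
        rw [← Real.cos_abs (Real.pi / 2 - ξ)]
        exact Real.cos_le_cos_of_nonneg_of_le_pi (abs_nonneg _) h2
          (abs_le.mpr ⟨by linarith, by linarith⟩)
      nlinarith [mul_le_mul_of_nonneg_right hle hc, mul_le_mul_of_nonneg_left hsum h]


/-- Proposition 2: closed-form optimal STAR-RIS amplitude coefficients given the phase
shifts.  With ξ = sgn(a_t)·arccos(a_r/√(a_r²+a_t²)) and the piecewise-defined ω*,
ω* ∈ [0, π/2] minimizes a_r sin ω + a_t cos ω over [0, π/2], and the induced amplitudes
β_r = sin²ω*, β_t = cos²ω* minimize a_r√β_r + a_t√β_t subject to β_r + β_t = 1. -/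
theorem stmt3 (a_r a_t : ℝ) (ha : a_t ≠ 0)
    (ξ : ℝ) (hξ : ξ = Real.sign a_t * Real.arccos (a_r / Real.sqrt (a_r ^ 2 + a_t ^ 2)))
    (ωstar : ℝ)
    (hω : ωstar =
      if -Real.pi ≤ ξ ∧ ξ < -(Real.pi / 2) then -(Real.pi / 2) - ξ
      else if -(Real.pi / 2) ≤ ξ ∧ ξ < Real.pi / 4 then 0
      else Real.pi / 2) :
    ωstar ∈ Set.Icc 0 (Real.pi / 2) ∧
    (∀ ω ∈ Set.Icc 0 (Real.pi / 2),
      a_r * Real.sin ωstar + a_t * Real.cos ωstar ≤ a_r * Real.sin ω + a_t * Real.cos ω) ∧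
    Real.sin ωstar ^ 2 + Real.cos ωstar ^ 2 = 1 ∧
    (∀ βr βt : ℝ, 0 ≤ βr → 0 ≤ βt → βr + βt = 1 →
      a_r * Real.sqrt (Real.sin ωstar ^ 2) + a_t * Real.sqrt (Real.cos ωstar ^ 2)
        ≤ a_r * Real.sqrt βr + a_t * Real.sqrt βt) := by
  obtain ⟨h1, h2, hx, hy⟩ := polar_angle a_r a_t ha ξ hξ
  obtain ⟨hmem, hmin⟩ := polar_min ξ ωstar h1 h2 hω
  have hR := Real.sqrt_nonneg (a_r ^ 2 + a_t ^ 2)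
  set R := Real.sqrt (a_r ^ 2 + a_t ^ 2)
  have key : ∀ s c : ℝ, 0 ≤ s → 0 ≤ c → s ^ 2 + c ^ 2 = 1 →
      a_r * Real.sin ωstar + a_t * Real.cos ωstar ≤ a_r * s + a_t * c := by
    intro s c hs hc hsc
    have := mul_le_mul_of_nonneg_left (hmin s c hs hc hsc) hR
    rw [hx, hy]
    linarith
  have hnn : ∀ ω ∈ Set.Icc 0 (Real.pi / 2), 0 ≤ Real.sin ω ∧ 0 ≤ Real.cos ω := fun ω h =>
    ⟨Real.sin_nonneg_of_nonneg_of_le_pi h.1 (by linarith [h.2, Real.pi_pos]),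
      Real.cos_nonneg_of_neg_pi_div_two_le_of_le (by linarith [h.1, Real.pi_pos]) h.2⟩
  refine ⟨hmem, fun ω h => key _ _ (hnn ω h).1 (hnn ω h).2 (Real.sin_sq_add_cos_sq ω),
    Real.sin_sq_add_cos_sq _, fun βr βt hr ht hsum => ?_⟩
  rw [Real.sqrt_sq (hnn _ hmem).1, Real.sqrt_sq (hnn _ hmem).2]
  exact key _ _ (Real.sqrt_nonneg _) (Real.sqrt_nonneg _)
    (by rw [Real.sq_sqrt hr, Real.sq_sqrt ht, hsum])
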